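/- arXiv:2601.12059 — 3 statements merged into one kernel-verified Lean document; each statement's English description precedes it below -/
import Mathlib

section
/- For an R-module E, the following are equivalent: (1) E is almost absolutely pure; (2) every short exact sequence of R-modules of the form 0 → E → B → C → 0 is almost pure; (3) for every injective R-module I containing E as a submodule, the short exact sequence 0 → E → I → I/E → 0 is almost pure; (4) for every finitely generated projective R-module P, every finitely generated submodule K ⊆ P with inclusion i : K → P, every R-linear map f : K → E, and every s ∈ m, there exists an R-linear map g : P → E with g ∘ i = s·f. -/
universe u

open CategoryTheory

/-- A module `E` is almost absolutely pure if `Ext¹ᴿ(N, E)` is almost zero for every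
finitely presented module `N`. -/
def IsAlmostAbsolutelyPure {R : Type u} [CommRing R] (m : Ideal R)
    (E : Type u) [AddCommGroup E] [Module R E] : Prop :=
  ∀ (N : Type u) [AddCommGroup N] [Module R N], Module.FinitePresentation R N →
    ∀ s ∈ m, ∀ x : ((Ext R (ModuleCat.{u} R) 1).obj
        (Opposite.op (ModuleCat.of R N))).obj (ModuleCat.of R E),
      s • x = 0

/-- A short exact sequence `0 → A →f B → C → 0` is almost pure if for every module `M`
the kernel of `M ⊗ A → M ⊗ B` is almost zero. -/
def IsAlmostPure {R : Type u} [CommRing R] (m : Ideal R)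
    {A B : Type u} [AddCommGroup A] [Module R A] [AddCommGroup B] [Module R B]
    (f : A →ₗ[R] B) : Prop :=
  ∀ (M : Type u) [AddCommGroup M] [Module R M],
    ∀ s ∈ m, ∀ x ∈ LinearMap.ker (LinearMap.lTensor M f), s • x = 0

/-!
Everything holds one scalar `s` at a time. For `p : P → N` surjective with `P` projective, `s` kills
`Ext¹(N, E)` exactly when `s • f` extends to `P` for each `f : ker p → E`; letting `N` run over the
finitely presented modules turns (1) into (4). On the other side, by the equational criterion for
the vanishing of a tensor, `s` kills the kernel of `M ⊗ A → M ⊗ B` for all `M` exactly when each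
finite linear system with constants in `A` that is solvable in `B` becomes solvable in `A` once its
constants are multiplied by `s`. The coefficients of such a system form a map `u` of finite free
modules, its constants a map `z` to `A`, and its scaled solution a map `y` with `y ∘ u = s • z`,
that is, an extension of a multiple of a map on the finitely generated submodule `range u`.
-/

section Extension

variable {R : Type*} [CommRing R] {s : R} {E P Q N X : Type*}
  [AddCommGroup E] [Module R E] [AddCommGroup P] [Module R P] [AddCommGroup Q] [Module R Q]
  [AddCommGroup N] [Module R N] [AddCommGroup X] [Module R X]

/-- The extension property of condition (4) for a single scalar and a single submodule: `s` times
any linear map `K → E` extends to the ambient module of `K`. -/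
def ExtendsUpTo (s : R) (K : Submodule R P) (E : Type*) [AddCommGroup E] [Module R E] : Prop :=
  ∀ f : K →ₗ[R] E, ∃ g : P →ₗ[R] E, g ∘ₗ K.subtype = s • f

theorem exists_comp_rangeRestrict_eq_of_ker_le {u : X →ₗ[R] P} {z : X →ₗ[R] E}
    (huz : LinearMap.ker u ≤ LinearMap.ker z) :
    ∃ f : LinearMap.range u →ₗ[R] E, f ∘ₗ u.rangeRestrict = z := by
  refine ⟨(LinearMap.ker u).liftQ z huz ∘ₗ u.quotKerEquivRange.symm.toLinearMap, ?_⟩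
  ext x
  have hx : u.quotKerEquivRange.symm (u.rangeRestrict x) = Submodule.Quotient.mk x := by
    rw [LinearEquiv.symm_apply_eq]
    rfl
  simp [hx]

theorem extendsUpTo_range_iff (u : X →ₗ[R] P) :
    ExtendsUpTo s (LinearMap.range u) E ↔
      ∀ z : X →ₗ[R] E, LinearMap.ker u ≤ LinearMap.ker z →
        ∃ y : P →ₗ[R] E, y ∘ₗ u = s • z := by
  constructor
  · intro h z huz
    obtain ⟨f, rfl⟩ := exists_comp_rangeRestrict_eq_of_ker_le huz
    obtain ⟨g, hg⟩ := h f
    refine ⟨g, ?_⟩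
    rw [← LinearMap.smul_comp, ← hg, LinearMap.comp_assoc, LinearMap.rangeRestrict,
      LinearMap.subtype_comp_codRestrict]
  · intro h f
    obtain ⟨y, hy⟩ := h (f ∘ₗ u.rangeRestrict)
      (u.ker_rangeRestrict.symm.trans_le (LinearMap.ker_le_ker_comp _ _))
    refine ⟨y, ?_⟩
    rw [← LinearMap.cancel_right u.surjective_rangeRestrict, LinearMap.comp_assoc,
      LinearMap.rangeRestrict, LinearMap.subtype_comp_codRestrict, hy, LinearMap.smul_comp]

/-- With lifts `α : P → Q` and `β : Q → P` of the identity of `N`, a map `f` on `ker p` is the sum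
of `f ∘ β ∘ α` and `f ∘ (1 - β ∘ α)`, and the second summand is defined on all of `P`. -/
theorem ExtendsUpTo.ker_of_surjective [Module.Projective R P] [Module.Projective R Q]
    {p : P →ₗ[R] N} {q : Q →ₗ[R] N} (h : ExtendsUpTo s (LinearMap.ker q) E)
    (hp : Function.Surjective p) (hq : Function.Surjective q) :
    ExtendsUpTo s (LinearMap.ker p) E := by
  intro f
  obtain ⟨α, hα⟩ := Module.projective_lifting_property q p hq
  obtain ⟨β, hβ⟩ := Module.projective_lifting_property p q hp
  have hqα (x) : q (α x) = p x := LinearMap.congr_fun hα x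
  have hpβ (x) : p (β x) = q x := LinearMap.congr_fun hβ x
  let βker : LinearMap.ker q →ₗ[R] LinearMap.ker p :=
    β.restrict fun x hx ↦ by simpa [hpβ] using hx
  let δ : P →ₗ[R] LinearMap.ker p :=
    (LinearMap.id - β ∘ₗ α).codRestrict _ fun x ↦ by simp [hqα, hpβ]
  obtain ⟨g, hg⟩ := h (f ∘ₗ βker)
  refine ⟨g ∘ₗ α + s • (f ∘ₗ δ), ?_⟩
  ext ⟨k, hk⟩
  have hαk : α k ∈ LinearMap.ker q := by simpa [hqα] using hk
  have hgα : g (α k) = s • f (βker ⟨α k, hαk⟩) := LinearMap.congr_fun hg ⟨α k, hαk⟩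
  have hsplit : βker ⟨α k, hαk⟩ + δ k = ⟨k, hk⟩ := by
    ext
    simp [βker, δ]
  calc g (α k) + s • f (δ k) = s • f (βker ⟨α k, hαk⟩ + δ k) := by rw [hgα, map_add, smul_add]
    _ = s • f ⟨k, hk⟩ := by rw [hsplit]

end Extension

section Ext

variable {R : Type u} [CommRing R] {s : R}

theorem mem_annihilator_homology_iff (S : ShortComplex (ModuleCat.{u} R)) :
    s ∈ Module.annihilator R S.homology ↔
      ∀ z : S.X₂, S.g z = 0 → ∃ y : S.X₁, S.f y = s • z := by
  have φ : S.homology ≃ₗ[R] LinearMap.ker S.g.hom ⧸ LinearMap.range S.moduleCatToCycles :=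
    S.moduleCatHomologyIso.toLinearEquiv
  rw [φ.annihilator_eq, Module.mem_annihilator]
  constructor
  · intro h z hz
    have hmk := h (Submodule.Quotient.mk ⟨z, hz⟩)
    rw [← Submodule.Quotient.mk_smul] at hmk
    obtain ⟨y, hy⟩ := (Submodule.Quotient.mk_eq_zero _).1 hmk
    exact ⟨y, congrArg Subtype.val hy⟩
  · intro h x
    obtain ⟨⟨z, hz⟩, rfl⟩ := Submodule.Quotient.mk_surjective _ x
    rw [← Submodule.Quotient.mk_smul]
    obtain ⟨y, hy⟩ := h z hz
    exact (Submodule.Quotient.mk_eq_zero _).2 ⟨y, Subtype.ext hy⟩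

theorem mem_annihilator_ext_one_iff_of_projectiveResolution {N : ModuleCat.{u} R}
    (P : ProjectiveResolution N) (E : ModuleCat.{u} R) :
    s ∈ Module.annihilator R (((Ext R (ModuleCat.{u} R) 1).obj (Opposite.op N)).obj E) ↔
      ExtendsUpTo s (LinearMap.range (P.complex.d 1 0).hom) E := by
  let K := P.complex.linearYonedaObj R E
  have hker : LinearMap.range (P.complex.d 2 1).hom = LinearMap.ker (P.complex.d 1 0).hom :=
    (P.exact_succ 0).moduleCat_range_eq_ker
  rw [(P.isoExt (R := R) 1 E).toLinearEquiv.annihilator_eq,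
    (K.homologyIsoSc' 0 1 2 (by simp) (by simp)).toLinearEquiv.annihilator_eq,
    mem_annihilator_homology_iff, extendsUpTo_range_iff, ← hker]
  simp only [LinearMap.range_le_ker_iff]
  constructor
  · intro h z hz
    obtain ⟨y, hy⟩ := h (ModuleCat.ofHom z) (ModuleCat.hom_ext hz)
    exact ⟨y.hom, congrArg ModuleCat.Hom.hom hy⟩
  · intro h z hz
    obtain ⟨y, hy⟩ := h z.hom (congrArg ModuleCat.Hom.hom hz)
    exact ⟨ModuleCat.ofHom y, ModuleCat.hom_ext hy⟩

variable {E P N : Type u} [AddCommGroup E] [Module R E] [AddCommGroup P] [Module R P]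
  [AddCommGroup N] [Module R N]

theorem mem_annihilator_ext_one_iff [Module.Projective R P] {p : P →ₗ[R] N}
    (hp : Function.Surjective p) :
    s ∈ Module.annihilator R (((Ext R (ModuleCat.{u} R) 1).obj
        (Opposite.op (ModuleCat.of R N))).obj (ModuleCat.of R E)) ↔
      ExtendsUpTo s (LinearMap.ker p) E := by
  let Q := projectiveResolution (ModuleCat.of R N)
  let q : Q.complex.X 0 ⟶ ModuleCat.of R N := Q.π.f 0
  have hq : Function.Surjective q.hom :=
    (ModuleCat.epi_iff_surjective q).1 (inferInstanceAs (Epi (Q.π.f 0)))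
  have hexact : (ShortComplex.mk (Q.complex.d 1 0) q Q.complex_d_comp_π_f_zero).Exact :=
    ShortComplex.exact_of_g_is_cokernel _ Q.isColimitCokernelCofork
  have hker : LinearMap.range (Q.complex.d 1 0).hom = LinearMap.ker q.hom :=
    hexact.moduleCat_range_eq_ker
  have : Module.Projective R (Q.complex.X 0) :=
    (IsProjective.iff_projective (Q.complex.X 0)).2 (Q.projective 0)
  rw [mem_annihilator_ext_one_iff_of_projectiveResolution Q, hker]
  exact ⟨fun h ↦ h.ker_of_surjective hp hq, fun h ↦ h.ker_of_surjective hq hp⟩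

variable {m : Ideal R}

theorem IsAlmostAbsolutelyPure.extendsUpTo [Module.Projective R P] [Module.Finite R P]
    (h : IsAlmostAbsolutelyPure m E) {K : Submodule R P} (hK : K.FG) (hs : s ∈ m) :
    ExtendsUpTo s K E := by
  have : Module.FinitePresentation R P := Module.finitePresentation_of_projective R P
  have hfp : Module.FinitePresentation R (P ⧸ K) :=
    Module.finitePresentation_of_surjective K.mkQ K.mkQ_surjective (by rwa [K.ker_mkQ])
  rw [← K.ker_mkQ]
  exact (mem_annihilator_ext_one_iff K.mkQ_surjective).1
    (Module.mem_annihilator.2 (h (P ⧸ K) hfp s hs))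

theorem isAlmostAbsolutelyPure_of_forall_extendsUpTo
    (h : ∀ s ∈ m, ∀ (n : ℕ) (K : Submodule R (Fin n → R)), K.FG → ExtendsUpTo s K E) :
    IsAlmostAbsolutelyPure m E := by
  intro N _ _ _ s hs
  obtain ⟨n, p, hp⟩ := Module.Finite.exists_fin' R N
  exact Module.mem_annihilator.1 ((mem_annihilator_ext_one_iff hp).2
    (h s hs n _ (Module.FinitePresentation.fg_ker p hp)))

end Ext

section EquationalPurity

open TensorProduct

variable {R : Type*} [CommRing R] {s : R} {A B M P : Type*} [AddCommGroup A] [Module R A]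
  [AddCommGroup B] [Module R B] [AddCommGroup M] [Module R M] [AddCommGroup P] [Module R P]
  {e : A →ₗ[R] B}

/-- The equational form of purity, up to the scalar `s`: if a finite system of linear equations with
coefficients `r` and constants `a` in `A` has a solution `b` in `B`, then the system with constants
`s • a` has a solution in `A`. The index types match `TensorProduct.VanishesTrivially`. -/
def IsEquationallyPureUpTo (s : R) (e : A →ₗ[R] B) : Prop :=
  ∀ (ι : Type) [Fintype ι] (k : ℕ) (r : ι → Fin k → R) (a : ι → A) (b : Fin k → B),
    (∀ i, e (a i) = ∑ j, r i j • b j) → ∃ y : Fin k → A, ∀ i, s • a i = ∑ j, r i j • y j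

theorem map_eq_sum_smul_map_single {ι : Type*} [Fintype ι] [DecidableEq ι]
    (f : (ι → R) →ₗ[R] M) (v : ι → R) : f v = ∑ i, v i • f (Pi.single i 1) := by
  conv_lhs => rw [pi_eq_sum_univ' v]
  simp only [map_sum, map_smul]

theorem span_range_map_single_eq_top {ι : Type*} [Finite ι] [DecidableEq ι]
    {f : (ι → R) →ₗ[R] M} (hf : Function.Surjective f) :
    Submodule.span R (Set.range fun i ↦ f (Pi.single i 1)) = ⊤ := by
  have := Fintype.ofFinite ι
  refine eq_top_iff.2 fun w _ ↦ ?_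
  obtain ⟨v, rfl⟩ := hf w
  exact (Submodule.mem_span_range_iff_exists_fun R).2 ⟨v, (map_eq_sum_smul_map_single f v).symm⟩

theorem exists_vanishesTrivially_sumElim {ι : Type*} [Fintype ι] {c : ι → M} {b : ι → B}
    (h : ∑ i, c i ⊗ₜ[R] b i = 0) :
    ∃ (l : ℕ) (d : Fin l → M), VanishesTrivially R (Sum.elim c d) (Sum.elim b 0) := by
  have hc (i) : c i ∈ Submodule.span R (Set.range c) := Submodule.subset_span ⟨i, rfl⟩
  obtain ⟨Q, hQ, hQfg, hQzero⟩ := TensorProduct.eq_zero_of_fg_of_subtype_eq_zero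
    (Submodule.fg_span (Set.finite_range c)) (t := ∑ i, ⟨c i, hc i⟩ ⊗ₜ[R] b i) (by simpa using h)
  have : Module.Finite R Q := Module.Finite.of_fg hQfg
  obtain ⟨l, d, hd⟩ := Module.Finite.exists_fin (R := R) (M := Q)
  let cQ (i : ι) : Q := ⟨c i, hQ (hc i)⟩
  have hspan : Submodule.span R (Set.range (Sum.elim cQ d)) = ⊤ := by
    rw [Set.Sum.elim_range, Submodule.span_union, hd, sup_top_eq]
  have hzero : ∑ i, Sum.elim cQ d i ⊗ₜ[R] Sum.elim b 0 i = 0 := by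
    simpa [cQ, Submodule.inclusion_apply] using hQzero
  obtain ⟨k, r, y, hy, hr⟩ := vanishesTrivially_of_sum_tmul_eq_zero R hspan hzero
  refine ⟨l, fun i ↦ d i, k, r, y, hy, fun j ↦ ?_⟩
  simpa [cQ] using congrArg Subtype.val (hr j)

theorem IsEquationallyPureUpTo.smul_eq_zero (h : IsEquationallyPureUpTo s e) {x : M ⊗[R] A}
    (hx : LinearMap.lTensor M e x = 0) : s • x = 0 := by
  obtain ⟨n, c, a, rfl⟩ := TensorProduct.exists_sum_tmul_eq x
  obtain ⟨l, d, k, r, b, hb, hr⟩ := exists_vanishesTrivially_sumElim (b := e ∘ a)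
    (by simpa using hx)
  have hsys (i) : e (Sum.elim a 0 i) = ∑ j, r i j • b j := by
    rw [← hb i]
    cases i <;> simp
  obtain ⟨y, hy⟩ := h _ k r _ b hsys
  have hzero := sum_tmul_eq_zero_of_vanishesTrivially R
    (m := Sum.elim c d) (n := fun i ↦ s • Sum.elim a 0 i) ⟨k, r, y, hy, hr⟩
  simpa [Finset.smul_sum] using hzero

/-- Testing against the cokernel of the transpose of `r` suffices: the relations among the classes
of the standard basis vectors there are exactly the combinations of the columns of `r`. -/
theorem isEquationallyPureUpTo_of_forall_quotient
    (h : ∀ (ι : Type) [Fintype ι] (C : Submodule R (ι → R)) (x : ((ι → R) ⧸ C) ⊗[R] A),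
      LinearMap.lTensor ((ι → R) ⧸ C) e x = 0 → s • x = 0) :
    IsEquationallyPureUpTo s e := by
  classical
  intro ι _ k r a b hab
  let C := Submodule.span R (Set.range fun j i ↦ r i j)
  let c (i : ι) : (ι → R) ⧸ C := C.mkQ (Pi.single i 1)
  have hc (v : ι → R) : ∑ i, v i • c i = 0 ↔ v ∈ C := by
    rw [← map_eq_sum_smul_map_single C.mkQ v, Submodule.mkQ_apply, Submodule.Quotient.mk_eq_zero]
  have hrc (j) : ∑ i, r i j • c i = 0 :=
    (hc _).2 (Submodule.subset_span ⟨j, rfl⟩)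
  have hzero : ∑ i, c i ⊗ₜ[R] (s • a i) = 0 := by
    have hker : LinearMap.lTensor ((ι → R) ⧸ C) e (∑ i, c i ⊗ₜ a i) = 0 := by
      simpa using sum_tmul_eq_zero_of_vanishesTrivially R (m := c) ⟨k, r, b, hab, hrc⟩
    simpa [Finset.smul_sum] using h ι C _ hker
  obtain ⟨l, t, y, hy, htc⟩ := vanishesTrivially_of_sum_tmul_eq_zero R
    (span_range_map_single_eq_top C.mkQ_surjective) hzero
  have ht (q : Fin l) : ∃ w : Fin k → R, ∑ j, w j • (fun i ↦ r i j) = fun i ↦ t i q :=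
    (Submodule.mem_span_range_iff_exists_fun R).1 ((hc _).1 (htc q))
  choose w hw using ht
  refine ⟨fun j ↦ ∑ q, w q j • y q, fun i ↦ ?_⟩
  have htw (q) : t i q = ∑ j, r i j * w q j := by
    simpa [mul_comm] using (congrFun (hw q) i).symm
  calc s • a i = ∑ q, ∑ j, (r i j * w q j) • y q := by simp only [hy, htw, Finset.sum_smul]
    _ = ∑ j, r i j • ∑ q, w q j • y q := by
      rw [Finset.sum_comm]
      simp only [Finset.smul_sum, mul_smul]

theorem isEquationallyPureUpTo_of_forall_extendsUpTo (he : Function.Injective e)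
    (h : ∀ (n : ℕ) (K : Submodule R (Fin n → R)), K.FG → ExtendsUpTo s K A) :
    IsEquationallyPureUpTo s e := by
  classical
  intro ι _ k r a b hab
  let u := Fintype.linearCombination R r
  let z := Fintype.linearCombination R a
  have hcomm : e ∘ₗ z = Fintype.linearCombination R b ∘ₗ u := by
    ext i
    simp [u, z, hab, Fintype.linearCombination_apply]
  have hker : LinearMap.ker u ≤ LinearMap.ker z := by
    rw [← LinearMap.ker_comp_of_ker_eq_bot z (LinearMap.ker_eq_bot.2 he), hcomm]
    exact LinearMap.ker_le_ker_comp _ _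
  obtain ⟨y, hy⟩ := (extendsUpTo_range_iff u).1 (h k _ (Submodule.fg_range u)) z hker
  refine ⟨fun j ↦ y (Pi.single j 1), fun i ↦ ?_⟩
  calc s • a i = y (r i) := by
        simpa [u, z] using (LinearMap.congr_fun hy (Pi.single i 1)).symm
    _ = ∑ j, r i j • y (Pi.single j 1) := map_eq_sum_smul_map_single y (r i)

theorem IsEquationallyPureUpTo.exists_comp_eq_smul [Module.Projective R P] [Module.Finite R P]
    (h : IsEquationallyPureUpTo s e) {n : ℕ} {u : (Fin n → R) →ₗ[R] P} {z : (Fin n → R) →ₗ[R] A}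
    {w : P →ₗ[R] B} (hcomm : e ∘ₗ z = w ∘ₗ u) : ∃ y : P →ₗ[R] A, y ∘ₗ u = s • z := by
  obtain ⟨k, π, hπ⟩ := Module.Finite.exists_fin' R P
  obtain ⟨σ, hσ⟩ := Module.projective_lifting_property π LinearMap.id hπ
  have hsys (i : Fin n) : e (z (Pi.single i 1)) =
      ∑ j, σ (u (Pi.single i 1)) j • w (π (Pi.single j 1)) := by
    calc e (z (Pi.single i 1)) = w (π (σ (u (Pi.single i 1)))) :=
          (LinearMap.congr_fun hcomm _).trans (congrArg w (LinearMap.congr_fun hσ _).symm)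
      _ = ∑ j, σ (u (Pi.single i 1)) j • w (π (Pi.single j 1)) :=
          map_eq_sum_smul_map_single (w ∘ₗ π) _
  obtain ⟨y, hy⟩ := h _ k (fun i ↦ σ (u (Pi.single i 1))) (fun i ↦ z (Pi.single i 1)) _ hsys
  refine ⟨Fintype.linearCombination R y ∘ₗ σ, ?_⟩
  ext i
  simp [Fintype.linearCombination_apply, hy]

end EquationalPurity

section AlmostPurity

theorem exists_embedding_into_injective_module (R E : Type u) [Ring R] [AddCommGroup E]
    [Module R E] :
    ∃ (I : ModuleCat.{u} R) (e : E →ₗ[R] I),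
      Module.Injective R I ∧ Function.Injective e :=
  ⟨Injective.under (ModuleCat.of R E), (Injective.ι (ModuleCat.of R E)).hom,
    Module.injective_module_of_injective_object R _
      (inj := inferInstanceAs (Injective (Injective.under (ModuleCat.of R E)))),
    (ModuleCat.mono_iff_injective (Injective.ι (ModuleCat.of R E))).1 inferInstance⟩

variable {R : Type u} [CommRing R] {m : Ideal R} {s : R} {A B E P : Type u}
  [AddCommGroup A] [Module R A] [AddCommGroup B] [Module R B]
  [AddCommGroup E] [Module R E] [AddCommGroup P] [Module R P]

theorem isAlmostPure_iff_forall_isEquationallyPureUpTo {e : A →ₗ[R] B} :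
    IsAlmostPure m e ↔ ∀ s ∈ m, IsEquationallyPureUpTo s e :=
  ⟨fun h s hs ↦ isEquationallyPureUpTo_of_forall_quotient fun _ _ _ x hx ↦ h _ s hs x hx,
    fun h _ _ _ s hs _ hx ↦ (h s hs).smul_eq_zero hx⟩

theorem IsEquationallyPureUpTo.extendsUpTo {I : Type u} [AddCommGroup I] [Module R I]
    [Module.Injective R I] [Module.Projective R P] [Module.Finite R P] {e : E →ₗ[R] I}
    (h : IsEquationallyPureUpTo s e) {K : Submodule R P} (hK : K.FG) : ExtendsUpTo s K E := by
  intro f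
  obtain ⟨w, hw⟩ := Module.Injective.out K.subtype K.injective_subtype (e ∘ₗ f)
  have : Module.Finite R K := Module.Finite.of_fg hK
  obtain ⟨n, q, hq⟩ := Module.Finite.exists_fin' R K
  obtain ⟨y, hy⟩ := h.exists_comp_eq_smul (u := K.subtype ∘ₗ q) (z := f ∘ₗ q) (w := w)
    (LinearMap.ext fun v ↦ (hw (q v)).symm)
  exact ⟨y, (LinearMap.cancel_right hq).1 hy⟩

end AlmostPurity

theorem almostAbsolutelyPure_tfae_general {R : Type u} [CommRing R] (m : Ideal R)
    (E : Type u) [AddCommGroup E] [Module R E] :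
    List.TFAE [
      IsAlmostAbsolutelyPure m E,
      ∀ (B C : Type u) [AddCommGroup B] [Module R B] [AddCommGroup C] [Module R C],
        ∀ (e : E →ₗ[R] B) (p : B →ₗ[R] C),
          Function.Injective e → Function.Surjective p →
            LinearMap.range e = LinearMap.ker p → IsAlmostPure m e,
      ∀ (I : Type u) [AddCommGroup I] [Module R I], Module.Injective R I →
        ∀ e : E →ₗ[R] I, Function.Injective e → IsAlmostPure m e,
      ∀ (P : Type u) [AddCommGroup P] [Module R P],
        Module.Projective R P → Module.Finite R P →
          ∀ K : Submodule R P, K.FG → ∀ f : K →ₗ[R] E, ∀ s ∈ m,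
            ∃ g : P →ₗ[R] E, g ∘ₗ K.subtype = s • f] := by
  tfae_have 1 → 2 := fun h B C _ _ _ _ e p he _ _ ↦
    isAlmostPure_iff_forall_isEquationallyPureUpTo.2 fun s hs ↦
      isEquationallyPureUpTo_of_forall_extendsUpTo he fun n K hK ↦ h.extendsUpTo hK hs
  tfae_have 2 → 3 := fun h I _ _ _ e he ↦
    h I (I ⧸ LinearMap.range e) e (LinearMap.range e).mkQ he (Submodule.mkQ_surjective _)
      (Submodule.ker_mkQ _).symm
  tfae_have 3 → 4 := by
    intro h P _ _ _ _ K hK f s hs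
    obtain ⟨I, e, hI, he⟩ := exists_embedding_into_injective_module R E
    exact (isAlmostPure_iff_forall_isEquationallyPureUpTo.1 (h I hI e he) s hs).extendsUpTo hK f
  tfae_have 4 → 1 := fun h ↦ isAlmostAbsolutelyPure_of_forall_extendsUpTo fun s hs n K hK f ↦
    h (Fin n → R) inferInstance inferInstance K hK f s hs
  tfae_finish

/-- Characterizations of almost absolutely pure modules. -/
theorem almostAbsolutelyPure_tfae
    {R : Type u} [CommRing R] (m : Ideal R) (hm : m * m = m)
    (E : Type u) [AddCommGroup E] [Module R E] :
    -- (1) ↔ (2)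
    ((IsAlmostAbsolutelyPure m E ↔
      (∀ (B C : Type u) [AddCommGroup B] [Module R B] [AddCommGroup C] [Module R C],
        ∀ (e : E →ₗ[R] B) (p : B →ₗ[R] C),
          Function.Injective e → Function.Surjective p →
            LinearMap.range e = LinearMap.ker p → IsAlmostPure m e)) ∧
    -- (1) ↔ (3)
    (IsAlmostAbsolutelyPure m E ↔
      (∀ (I : Type u) [AddCommGroup I] [Module R I], Module.Injective R I →
        ∀ e : E →ₗ[R] I, Function.Injective e → IsAlmostPure m e)) ∧
    -- (1) ↔ (4)
    (IsAlmostAbsolutelyPure m E ↔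
      (∀ (P : Type u) [AddCommGroup P] [Module R P],
        Module.Projective R P → Module.Finite R P →
          ∀ K : Submodule R P, K.FG → ∀ f : K →ₗ[R] E, ∀ s ∈ m,
            ∃ g : P →ₗ[R] E, g ∘ₗ K.subtype = s • f))) := by
  have h := almostAbsolutelyPure_tfae_general m E
  exact ⟨h.out 0 1, h.out 0 2, h.out 0 3⟩
end

section
/- For an R-module F, the following are equivalent: (1) F is almost flat; (2) for every injective R-module I, the R-module Hom_R(F, I) is almost absolutely pure; (3) for every injective cogenerator E for R-modules, Hom_R(F, E) is almost absolutely pure. -/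
universe u

open CategoryTheory

/-- A module `F` is almost flat if `Tor₁ᴿ(N, F)` is almost zero for every module `N`. -/
def IsAlmostFlat {R : Type u} [CommRing R] (m : Ideal R)
    (F : Type u) [AddCommGroup F] [Module R F] : Prop :=
  ∀ (N : Type u) [AddCommGroup N] [Module R N],
    ∀ s ∈ m, ∀ x : ((Tor (ModuleCat.{u} R) 1).obj (ModuleCat.of R N)).obj (ModuleCat.of R F),
      s • x = 0

/-!
For an injective module `I` there is an isomorphism `Ext¹(N, Hom(F, I)) ≃ Hom(Tor₁(N, F), I)`. To
see it, present `N` by a projective `Q` with kernel `L`: the left side is the cokernel of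
`Hom(Q, Hom(F, I)) → Hom(L, Hom(F, I))`, which by adjunction and injectivity of `I` is the dual of
`ker (L ⊗ F → Q ⊗ F)`, and the snake lemma identifies that kernel with `Tor₁(N, F)`, computed from
a resolution of `F`. So whatever kills `Tor₁(N, F)` kills `Ext¹(N, Hom(F, I))`, and conversely if
`I` is a cogenerator. To pass from finitely presented to arbitrary `N`, note that an element of
`ker (L ⊗ F → Q ⊗ F)` with `Q` free already lives over a finitely generated submodule of `L`, which
embeds into a finite free quotient of `Q`.
-/

open TensorProduct

section Homology

universe v

variable {R : Type*} [Ring R] (S : ShortComplex (ModuleCat.{v} R))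
  {C : Type*} [AddCommGroup C] [Module R C]

/-- The homology of `X₁ → X₂ → X₃`, computed by factoring the second map through a cokernel
`p : X₂ → C` of the first. -/
noncomputable def homologyEquivKer (p : S.X₂ →ₗ[R] C) (q : C →ₗ[R] S.X₃)
    (hp : Function.Surjective p) (hfp : Function.Exact S.f.hom p) (hg : S.g.hom = q ∘ₗ p) :
    S.homology ≃ₗ[R] LinearMap.ker q :=
  have maps_ker : ∀ x ∈ LinearMap.ker S.g.hom, p x ∈ LinearMap.ker q := fun x hx ↦ by
    rwa [hg] at hx
  have exact_restrict : Function.Exact S.moduleCatToCycles (p.restrict maps_ker) := fun x ↦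
    (Subtype.ext_iff.trans (hfp x)).trans (exists_congr fun _ ↦ Subtype.ext_iff.symm)
  have restrict_surjective : Function.Surjective (p.restrict maps_ker) := by
    rintro ⟨y, hy⟩
    obtain ⟨x, rfl⟩ := hp y
    exact ⟨⟨x, by rwa [hg]⟩, rfl⟩
  S.moduleCatHomologyIso.toLinearEquiv ≪≫ₗ
    exact_restrict.linearEquivOfSurjective restrict_surjective

/-- The homology of `X₁ → X₂ → X₃`, computed by factoring the first map through a kernel
`i : C → X₂` of the second. -/
noncomputable def homologyEquivQuotientRange (a : S.X₁ →ₗ[R] C) (i : C →ₗ[R] S.X₂)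
    (hi : Function.Injective i) (hig : Function.Exact i S.g.hom) (hf : S.f.hom = i ∘ₗ a) :
    S.homology ≃ₗ[R] C ⧸ LinearMap.range a :=
  let e : C ≃ₗ[R] LinearMap.ker S.g.hom :=
    LinearEquiv.ofInjective i hi ≪≫ₗ LinearEquiv.ofEq _ _ hig.linearMap_ker_eq.symm
  have toCycles_eq : S.moduleCatToCycles = e.toLinearMap ∘ₗ a :=
    LinearMap.ext fun x ↦ Subtype.ext congr($hf x)
  have map_range : (LinearMap.range a).map e.toLinearMap = LinearMap.range S.moduleCatToCycles := by
    rw [toCycles_eq, LinearMap.range_comp]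
  S.moduleCatHomologyIso.toLinearEquiv ≪≫ₗ (Submodule.Quotient.equiv _ _ e map_range).symm

end Homology

section Resolution

variable {R : Type u} [Ring R] {M : ModuleCat.{u} R} (P : ProjectiveResolution M)

/-- The augmentation `P₀ → M` of a projective resolution, as a linear map. -/
noncomputable def augmentation : P.complex.X 0 →ₗ[R] M :=
  ModuleCat.Hom.hom (P.π.f 0)

lemma augmentation_surjective : Function.Surjective (augmentation P) :=
  (ModuleCat.epi_iff_surjective (P.π.f 0)).1 inferInstance

lemma exact_d_augmentation : Function.Exact (P.complex.d 1 0).hom (augmentation P) :=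
  (ShortComplex.ShortExact.moduleCat_exact_iff_function_exact _).1 P.exact₀

/-- The first syzygy of a projective resolution, realised as the kernel of the augmentation. -/
noncomputable abbrev syzygy : Submodule R (P.complex.X 0) :=
  LinearMap.ker (augmentation P)

/-- The differential `P₁ → P₀` with codomain restricted to the first syzygy. -/
noncomputable def toSyzygy : P.complex.X 1 →ₗ[R] syzygy P :=
  (P.complex.d 1 0).hom.codRestrict _ (exact_d_augmentation P).apply_apply_eq_zero

lemma toSyzygy_surjective : Function.Surjective (toSyzygy P) := by
  rintro ⟨y, hy⟩
  obtain ⟨x, rfl⟩ := (exact_d_augmentation P y).1 hy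
  exact ⟨x, rfl⟩

lemma exact_d_toSyzygy : Function.Exact (P.complex.d 2 1).hom (toSyzygy P) := fun x ↦
  Subtype.ext_iff.trans <|
    (ShortComplex.ShortExact.moduleCat_exact_iff_function_exact _).1 (P.exact_succ 0) x

lemma projective_resolution_zero : Module.Projective R (P.complex.X 0) :=
  (IsProjective.iff_projective (R := R) (P.complex.X 0)).2 (P.projective 0)

end Resolution

section TorExt

variable {R : Type u} [CommRing R] {M : ModuleCat.{u} R} (P : ProjectiveResolution M)

/-- `Tor₁(N, M)` as the kernel of `N ⊗ Ω → N ⊗ P₀`, where `Ω` is the first syzygy of a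
projective resolution of `M`. -/
noncomputable def torEquivKerLTensor (N : ModuleCat.{u} R) :
    ((Tor (ModuleCat.{u} R) 1).obj N).obj M ≃ₗ[R]
      LinearMap.ker ((syzygy P).subtype.lTensor N) :=
  let p : N ⊗[R] P.complex.X 1 →ₗ[R] N ⊗[R] syzygy P := (toSyzygy P).lTensor N
  (P.isoLeftDerivedObj _ 1 ≪≫
    HomologicalComplex.homologyIsoSc' _ 2 1 0 (by simp) (by simp)).toLinearEquiv ≪≫ₗ
  homologyEquivKer _ p _
    (LinearMap.lTensor_surjective N (toSyzygy_surjective P))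
    (by exact lTensor_exact N (exact_d_toSyzygy P) (toSyzygy_surjective P))
    (by exact LinearMap.lTensor_comp N (syzygy P).subtype (toSyzygy P))

/-- `Ext¹(M, E)` as the cokernel of `Hom(P₀, E) → Hom(Ω, E)`, where `Ω` is the first syzygy of a
projective resolution of `M`. -/
noncomputable def extEquivQuotientRangeLcomp (E : ModuleCat.{u} R) :
    ((Ext R (ModuleCat.{u} R) 1).obj (Opposite.op M)).obj E ≃ₗ[R]
      (syzygy P →ₗ[R] E) ⧸ LinearMap.range ((syzygy P).subtype.lcomp R E) :=
  let restrict : (P.complex.X 0 ⟶ E) →ₗ[R] (syzygy P →ₗ[R] E) :=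
    (syzygy P).subtype.lcomp R E ∘ₗ ModuleCat.homLinearEquiv.toLinearMap
  have range_restrict : LinearMap.range restrict =
      LinearMap.range ((syzygy P).subtype.lcomp R E) :=
    LinearMap.range_comp_of_range_eq_top _ (LinearEquiv.range _)
  let inflate : (syzygy P →ₗ[R] E) →ₗ[R] (P.complex.X 1 ⟶ E) :=
    ModuleCat.homLinearEquiv.symm.toLinearMap ∘ₗ (toSyzygy P).lcomp R E
  have inflate_injective : Function.Injective inflate :=
    ModuleCat.homLinearEquiv.symm.injective.comp
      (LinearMap.lcomp_injective_of_surjective _ (toSyzygy_surjective P))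
  have exact_inflate (x : P.complex.X 1 ⟶ E) :
      P.complex.d 2 1 ≫ x = 0 ↔ x ∈ Set.range inflate :=
    ModuleCat.hom_ext_iff.trans <|
      (LinearMap.exact_lcomp_of_exact_of_surjective E (exact_d_toSyzygy P)
        (toSyzygy_surjective P) x.hom).trans
      (exists_congr fun _ ↦ ModuleCat.hom_ext_iff.symm)
  (P.isoExt 1 E ≪≫
    HomologicalComplex.homologyIsoSc' _ 0 1 2 (by simp) (by simp)).toLinearEquiv ≪≫ₗ
  homologyEquivQuotientRange _ restrict inflate inflate_injective exact_inflate rfl ≪≫ₗ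
  Submodule.quotEquivOfEq _ _ range_restrict

end TorExt

section Balance

variable {R : Type*} [CommRing R] {K P F L Q N : Type*}
  [AddCommGroup K] [Module R K] [AddCommGroup P] [Module R P] [AddCommGroup F] [Module R F]
  [AddCommGroup L] [Module R L] [AddCommGroup Q] [Module R Q] [AddCommGroup N] [Module R N]

/-- The balancing of `Tor₁` for flat presentations `0 → K → P → F → 0` and `0 → L → Q → N → 0`,
given by the connecting map of the snake lemma for the rows `L ⊗ (K → P → F)` and
`Q ⊗ (K → P → F)`. -/
noncomputable def kerRTensorEquivKerLTensor [Module.Flat R P] [Module.Flat R Q]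
    {i : K →ₗ[R] P} {π : P →ₗ[R] F} (hi : Function.Injective i) (hiπ : Function.Exact i π)
    (hπ : Function.Surjective π)
    {j : L →ₗ[R] Q} {ρ : Q →ₗ[R] N} (hj : Function.Injective j) (hjρ : Function.Exact j ρ)
    (hρ : Function.Surjective ρ) :
    LinearMap.ker (j.rTensor F) ≃ₗ[R] LinearMap.ker (i.lTensor N) :=
  let δ := SnakeLemma.δ' (j.rTensor K) (j.rTensor P) (j.rTensor F)
    (i.lTensor L) (π.lTensor L) (lTensor_exact L hiπ hπ)
    (i.lTensor Q) (π.lTensor Q) (lTensor_exact Q hiπ hπ)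
    (by simp only [LinearMap.lTensor_comp_rTensor, LinearMap.rTensor_comp_lTensor])
    (by simp only [LinearMap.lTensor_comp_rTensor, LinearMap.rTensor_comp_lTensor])
    (LinearMap.ker (j.rTensor F)).subtype (LinearMap.exact_subtype_ker_map _)
    (ρ.rTensor K) (rTensor_exact K hjρ hρ)
    (LinearMap.lTensor_surjective L hπ)
    (Module.Flat.lTensor_preserves_injective_linearMap i hi)
  have δ_injective : Function.Injective δ :=
    (LinearMap.exact_zero_iff_injective PUnit δ).1 <|
      SnakeLemma.exact_δ'_right _ _ _ _ _ _ _ _ _ _ _ 0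
        ((LinearMap.exact_zero_iff_injective _ _).2
          (Module.Flat.rTensor_preserves_injective_linearMap j hj))
        _ _ _ _ _ _ 0 (by simp only [LinearMap.comp_zero]) (Submodule.subtype_injective _)
  have exact_δ : Function.Exact δ (i.lTensor N) :=
    SnakeLemma.exact_δ'_left _ _ _ _ _ _ _ _ _ _ _ _ _ _ _ (ρ.rTensor P)
      (rTensor_exact P hjρ hρ) _ _ _
      (by simp only [LinearMap.lTensor_comp_rTensor, LinearMap.rTensor_comp_lTensor])
      (LinearMap.rTensor_surjective K hρ)
  LinearEquiv.ofInjective δ δ_injective ≪≫ₗ LinearEquiv.ofEq _ _ exact_δ.linearMap_ker_eq.symm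

end Balance

section InjectiveDual

universe v

variable {R : Type*} [CommRing R] {I : Type v} [AddCommGroup I] [Module R I]
  {A B F : Type*} [AddCommGroup A] [Module R A] [AddCommGroup B] [Module R B]
  [AddCommGroup F] [Module R F]

variable (I) in
lemma lcomp_surjective_of_injective [Small.{v} R] [Module.Injective R I] {f : A →ₗ[R] B}
    (hf : Function.Injective f) : Function.Surjective (f.lcomp R I) :=
  Module.Injective.extension_property R I A B f hf

variable (I) in
lemma exact_lcomp_lcomp_subtype_ker [Small.{v} R] [Module.Injective R I] (f : A →ₗ[R] B) :
    Function.Exact (f.lcomp R I) ((LinearMap.ker f).subtype.lcomp R I) := by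
  have exact_range : Function.Exact (LinearMap.ker f).subtype f.rangeRestrict := by
    rw [LinearMap.exact_iff, LinearMap.ker_rangeRestrict, Submodule.range_subtype]
  have restrict_surjective : Function.Surjective ((LinearMap.range f).subtype.lcomp R I) :=
    lcomp_surjective_of_injective I (LinearMap.range f).subtype_injective
  exact restrict_surjective.comp_exact_iff_exact.2
    (LinearMap.exact_lcomp_of_exact_of_surjective I exact_range f.surjective_rangeRestrict)

variable (I F) in
/-- For injective `I`, the cokernel of `Hom(B, Hom(F, I)) → Hom(A, Hom(F, I))` is dual to the
kernel of `A ⊗ F → B ⊗ F`. -/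
noncomputable def quotientRangeLcompHomEquiv [Small.{v} R] [Module.Injective R I]
    (f : A →ₗ[R] B) :
    ((A →ₗ[R] F →ₗ[R] I) ⧸ LinearMap.range (f.lcomp R (F →ₗ[R] I))) ≃ₗ[R]
      (LinearMap.ker (f.rTensor F) →ₗ[R] I) :=
  let uncurryA := TensorProduct.lift.equiv (.id R) A F I
  let uncurryB := TensorProduct.lift.equiv (.id R) B F I
  have uncurry_naturality : uncurryA.toLinearMap ∘ₗ f.lcomp R (F →ₗ[R] I) =
      (f.rTensor F).lcomp R I ∘ₗ uncurryB.toLinearMap :=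
    LinearMap.ext fun _ ↦ TensorProduct.ext' fun _ _ ↦ rfl
  have map_range : (LinearMap.range (f.lcomp R (F →ₗ[R] I))).map uncurryA.toLinearMap =
      LinearMap.range ((f.rTensor F).lcomp R I) := by
    rw [← LinearMap.range_comp, uncurry_naturality,
      LinearMap.range_comp_of_range_eq_top _ uncurryB.range]
  Submodule.Quotient.equiv _ _ uncurryA map_range ≪≫ₗ
    (exact_lcomp_lcomp_subtype_ker I (f.rTensor F)).linearEquivOfSurjective
      (lcomp_surjective_of_injective I (Submodule.subtype_injective _))

end InjectiveDual

section Duality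

variable {R : Type u} [CommRing R]

/-- `Tor₁(N, F)` computed from a flat presentation `0 → L → Q → N → 0` of its first argument. -/
noncomputable def torEquivKerRTensor {L Q N : Type u} [AddCommGroup L] [Module R L]
    [AddCommGroup Q] [Module R Q] [AddCommGroup N] [Module R N] [Module.Flat R Q]
    {j : L →ₗ[R] Q} {ρ : Q →ₗ[R] N} (hj : Function.Injective j) (hjρ : Function.Exact j ρ)
    (hρ : Function.Surjective ρ) (F : ModuleCat.{u} R) :
    ((Tor (ModuleCat.{u} R) 1).obj (ModuleCat.of R N)).obj F ≃ₗ[R]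
      LinearMap.ker (j.rTensor F) :=
  let P := ProjectiveResolution.of F
  have := projective_resolution_zero P
  torEquivKerLTensor P (ModuleCat.of R N) ≪≫ₗ
    (kerRTensorEquivKerLTensor (syzygy P).subtype_injective (LinearMap.exact_subtype_ker_map _)
      (augmentation_surjective P) hj hjρ hρ).symm

lemma annihilator_tor_eq {L Q N : Type u} [AddCommGroup L] [Module R L]
    [AddCommGroup Q] [Module R Q] [AddCommGroup N] [Module R N] [Module.Flat R Q]
    {j : L →ₗ[R] Q} {ρ : Q →ₗ[R] N} (hj : Function.Injective j) (hjρ : Function.Exact j ρ)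
    (hρ : Function.Surjective ρ) (F : Type u) [AddCommGroup F] [Module R F] :
    Module.annihilator R
        (((Tor (ModuleCat.{u} R) 1).obj (ModuleCat.of R N)).obj (ModuleCat.of R F)) =
      (LinearMap.ker (j.rTensor F)).annihilator :=
  (torEquivKerRTensor hj hjρ hρ (ModuleCat.of R F)).annihilator_eq

/-- The duality `Ext¹(N, Hom(F, I)) ≃ Hom(Tor₁(N, F), I)` for injective `I`. -/
noncomputable def extHomEquivHomTor (N F I : Type u) [AddCommGroup N] [Module R N]
    [AddCommGroup F] [Module R F] [AddCommGroup I] [Module R I] [Module.Injective R I] :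
    ((Ext R (ModuleCat.{u} R) 1).obj (Opposite.op (ModuleCat.of R N))).obj
        (ModuleCat.of R (F →ₗ[R] I)) ≃ₗ[R]
      (((Tor (ModuleCat.{u} R) 1).obj (ModuleCat.of R N)).obj (ModuleCat.of R F) →ₗ[R] I) :=
  let P := ProjectiveResolution.of (ModuleCat.of R N)
  have := projective_resolution_zero P
  extEquivQuotientRangeLcomp P (ModuleCat.of R (F →ₗ[R] I)) ≪≫ₗ
    quotientRangeLcompHomEquiv I F (syzygy P).subtype ≪≫ₗ
    (torEquivKerRTensor (syzygy P).subtype_injective (LinearMap.exact_subtype_ker_map _)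
      (augmentation_surjective P) (ModuleCat.of R F)).symm.congrLeft I R

end Duality

section Cogenerator

universe v

/-- `E` is a cogenerator for the `R`-modules in its own universe. -/
def IsCogenerator (R : Type*) [Ring R] (E : Type v) [AddCommGroup E] [Module R E] : Prop :=
  ∀ (T : Type v) [AddCommGroup T] [Module R T], (∀ φ : T →ₗ[R] E, φ = 0) → Subsingleton T

variable {R : Type u} [CommRing R]

lemma injective_characterModule_self : Module.Injective R (CharacterModule R) :=
  Module.Flat.iff_characterModule_injective.1 inferInstance

lemma isCogenerator_characterModule_self : IsCogenerator R (CharacterModule R) := by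
  intro T _ _ hom_eq_zero
  let e : (T →ₗ[R] CharacterModule R) ≃ₗ[R] CharacterModule T :=
    CharacterModule.homEquiv ≪≫ₗ CharacterModule.congr (TensorProduct.rid R T)
  have character_eq_zero (c : CharacterModule T) : c = 0 :=
    e.symm.map_eq_zero_iff.1 (hom_eq_zero _)
  refine subsingleton_of_forall_eq 0 fun t ↦ CharacterModule.eq_zero_of_character_apply fun c ↦ ?_
  rw [character_eq_zero c]
  rfl

variable {T E : Type v} [AddCommGroup T] [Module R T] [AddCommGroup E] [Module R E]

lemma annihilator_hom_le_of_isCogenerator [Small.{v} R] [Module.Injective R E]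
    (hE : IsCogenerator R E) :
    Module.annihilator R (T →ₗ[R] E) ≤ Module.annihilator R T := by
  intro s hs
  -- A map `s T → E` extends to `ψ : T → E` and is therefore the restriction of `s • ψ = 0`.
  let sT := LinearMap.range (LinearMap.lsmul R T s)
  have hom_eq_zero (φ : sT →ₗ[R] E) : φ = 0 := by
    obtain ⟨ψ, rfl⟩ := lcomp_surjective_of_injective E sT.subtype_injective φ
    ext ⟨_, t, rfl⟩
    have := congr($(Module.mem_annihilator.1 hs ψ) t)
    simpa using this
  have := hE sT hom_eq_zero
  rw [Module.mem_annihilator]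
  intro t
  exact congr(($(Subsingleton.elim (⟨s • t, t, rfl⟩ : sT) 0) : T))

end Cogenerator

section FiniteReduction

variable {R : Type u} [CommRing R] {F : Type u} [AddCommGroup F] [Module R F]

lemma exists_finset_injective_lsubtypeDomain_comp {M ι : Type*} [AddCommGroup M] [Module R M]
    [Module.Finite R M] {j : M →ₗ[R] ι →₀ R} (hj : Function.Injective j) :
    ∃ S : Finset ι, Function.Injective
      ((Finsupp.lsubtypeDomain (S : Set ι) : (ι →₀ R) →ₗ[R] S →₀ R) ∘ₗ j) := by
  classical
  obtain ⟨G, hG⟩ := Module.Finite.fg_top (R := R) (M := M)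
  let S : Finset ι := G.biUnion fun g ↦ (j g).support
  have range_le : LinearMap.range j ≤ Finsupp.supported R R (S : Set ι) := by
    rw [LinearMap.range_eq_map, ← hG, Submodule.map_span_le]
    exact fun g hg ↦ Finset.coe_subset.2
      (Finset.subset_biUnion_of_mem (fun g ↦ (j g).support) hg)
  refine ⟨S, fun x y hxy ↦ hj ?_⟩
  have := (Finsupp.supportedEquivFinsupp (M := R) (R := R) (S : Set ι)).injective
    (a₁ := ⟨j x, range_le ⟨x, rfl⟩⟩) (a₂ := ⟨j y, range_le ⟨y, rfl⟩⟩) hxy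
  exact congr(($this : ι →₀ R))

lemma mem_annihilator_ker_rTensor_of_finite {s : R}
    (h : ∀ (M G : Type u) [AddCommGroup M] [Module R M] [AddCommGroup G] [Module R G]
      [Module.Finite R M] [Module.Finite R G] [Module.Free R G] (j : M →ₗ[R] G),
      Function.Injective j → s ∈ (LinearMap.ker (j.rTensor F)).annihilator)
    {L ι : Type u} [AddCommGroup L] [Module R L] {j : L →ₗ[R] ι →₀ R}
    (hj : Function.Injective j) : s ∈ (LinearMap.ker (j.rTensor F)).annihilator := by
  refine Submodule.mem_annihilator.2 fun x hx ↦ ?_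
  obtain ⟨M, hM, hxM⟩ :=
    TensorProduct.exists_finite_submodule_left_of_setFinite {x} (Set.finite_singleton x)
  obtain ⟨y, rfl⟩ := hxM rfl
  obtain ⟨S, hS⟩ :=
    exists_finset_injective_lsubtypeDomain_comp (j := j ∘ₗ M.subtype) (hj.comp M.subtype_injective)
  have hy : y ∈ LinearMap.ker (((Finsupp.lsubtypeDomain (S : Set ι) : (ι →₀ R) →ₗ[R] S →₀ R) ∘ₗ
      j ∘ₗ M.subtype).rTensor F) := by
    simp only [LinearMap.rTensor_comp, LinearMap.mem_ker, LinearMap.comp_apply] at hx ⊢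
    rw [hx, map_zero]
  rw [← map_smul, Submodule.mem_annihilator.1 (h _ _ _ hS) y hy, map_zero]

end FiniteReduction

section AlmostFlat

variable {R : Type u} [CommRing R] {m : Ideal R} {F : Type u} [AddCommGroup F] [Module R F]

lemma isAlmostAbsolutelyPure_hom (hF : IsAlmostFlat m F) (I : Type u) [AddCommGroup I]
    [Module R I] [Module.Injective R I] : IsAlmostAbsolutelyPure m (F →ₗ[R] I) := by
  intro N _ _ _ s hs
  rw [← Module.mem_annihilator, (extHomEquivHomTor N F I).annihilator_eq, Module.mem_annihilator]
  intro φ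
  ext t
  rw [LinearMap.smul_apply, ← map_smul, hF N s hs t, map_zero, LinearMap.zero_apply]

lemma isAlmostFlat_of_finitePresentation
    (h : ∀ (N : Type u) [AddCommGroup N] [Module R N], Module.FinitePresentation R N →
      m ≤ Module.annihilator R
        (((Tor (ModuleCat.{u} R) 1).obj (ModuleCat.of R N)).obj (ModuleCat.of R F))) :
    IsAlmostFlat m F := by
  intro N _ _ s hs
  obtain ⟨L, _, _, j, ρ, hj, hjρ, hρ⟩ : ∃ (L : Type u) (_ : AddCommGroup L) (_ : Module R L)
      (j : L →ₗ[R] N →₀ R) (ρ : (N →₀ R) →ₗ[R] N),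
      Function.Injective j ∧ Function.Exact j ρ ∧ Function.Surjective ρ :=
    ⟨_, _, _, _, _, Submodule.subtype_injective _, LinearMap.exact_subtype_ker_map _,
      Finsupp.linearCombination_id_surjective R N⟩
  rw [← Module.mem_annihilator, annihilator_tor_eq hj hjρ hρ F]
  refine mem_annihilator_ker_rTensor_of_finite ?_ hj
  intro M G _ _ _ _ _ _ _ i hi
  have := Module.finitePresentation_of_projective R G
  have finitePresentation_coker : Module.FinitePresentation R (G ⧸ LinearMap.range i) :=
    Module.finitePresentation_of_surjective _ (Submodule.mkQ_surjective _)
      (by rw [Submodule.ker_mkQ]; exact Submodule.fg_range i)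
  rw [← annihilator_tor_eq hi (LinearMap.exact_map_mkQ_range i) (Submodule.mkQ_surjective _)]
  exact h _ finitePresentation_coker hs

lemma isAlmostFlat_of_isCogenerator {E : Type u} [AddCommGroup E] [Module R E]
    [Module.Injective R E] (hE : IsCogenerator R E)
    (h : IsAlmostAbsolutelyPure m (F →ₗ[R] E)) : IsAlmostFlat m F := by
  refine isAlmostFlat_of_finitePresentation fun N _ _ hN s hs ↦
    annihilator_hom_le_of_isCogenerator hE ?_
  rw [← (extHomEquivHomTor N F E).annihilator_eq]
  exact Module.mem_annihilator.2 (h N hN s hs)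

end AlmostFlat

theorem almostFlat_iff_hom_almostAbsolutelyPure_general
    {R : Type u} [CommRing R] (m : Ideal R) (F : Type u) [AddCommGroup F] [Module R F] :
    [IsAlmostFlat m F,
      ∀ (I : Type u) [AddCommGroup I] [Module R I], Module.Injective R I →
        IsAlmostAbsolutelyPure m (F →ₗ[R] I),
      ∀ (E : Type u) [AddCommGroup E] [Module R E], Module.Injective R E → IsCogenerator R E →
        IsAlmostAbsolutelyPure m (F →ₗ[R] E),
      ∃ (E : Type u) (_ : AddCommGroup E) (_ : Module R E), Module.Injective R E ∧
        IsCogenerator R E ∧ IsAlmostAbsolutelyPure m (F →ₗ[R] E)].TFAE := by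
  tfae_have 1 → 2 := fun hF I _ _ _ ↦ isAlmostAbsolutelyPure_hom hF I
  tfae_have 2 → 3 := fun h E _ _ hE _ ↦ h E hE
  tfae_have 3 → 4 := fun h ↦ ⟨CharacterModule R, _, _, injective_characterModule_self,
    isCogenerator_characterModule_self,
    h _ injective_characterModule_self isCogenerator_characterModule_self⟩
  tfae_have 4 → 1 := fun ⟨_, _, _, _, hE, h⟩ ↦ isAlmostFlat_of_isCogenerator hE h
  tfae_finish

/-- `F` is almost flat iff `Hom_R(F, I)` is almost absolutely pure
for every injective `I`, iff `Hom_R(F, E)` is almost absolutely pure for every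
injective cogenerator `E`. -/
theorem almostFlat_iff_hom_almostAbsolutelyPure
    {R : Type u} [CommRing R] (m : Ideal R) (hm : m * m = m)
    (F : Type u) [AddCommGroup F] [Module R F] :
    -- (1) ↔ (2)
    ((IsAlmostFlat m F ↔
      (∀ (I : Type u) [AddCommGroup I] [Module R I], Module.Injective R I →
        IsAlmostAbsolutelyPure m (F →ₗ[R] I))) ∧
    -- (1) ↔ (3)
    (IsAlmostFlat m F ↔
      (∀ (E : Type u) [AddCommGroup E] [Module R E], Module.Injective R E →
        (∀ (T : Type u) [AddCommGroup T] [Module R T],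
          (∀ φ : T →ₗ[R] E, φ = 0) → Subsingleton T) →
        IsAlmostAbsolutelyPure m (F →ₗ[R] E)))) := by
  have tfae := almostFlat_iff_hom_almostAbsolutelyPure_general m F
  exact ⟨tfae.out 0 1, tfae.out 0 2⟩
end

section
/- Let R be a commutative ring, s ∈ R, and let 0 → A →f B →g C → 0 be a short exact sequence of R-modules. Then there exists an R-linear map f' : B → A with f' ∘ f = s·id_A if and only if there exists an R-linear map g' : C → B with g ∘ g' = s·id_C. -/
universe u

/-!
Multiplication by `s` is an endomorphism of the short exact sequence, and the equivalence holds for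
any morphism `(α, β, γ)` of exact sequences in place of it. If `h ∘ f₁ = α`, then `β - f₂ ∘ h`
vanishes on the image of `f₁`, so it descends along `g₁` to a lift of `γ` through `g₂`. Dually, if
`g₂ ∘ k = γ`, then `β - k ∘ g₁` takes values in the kernel of `g₂`, so it factors through `f₂` as
an extension of `α` along `f₁`.
-/

section Factorization

variable {R A B C M : Type*} [Ring R] [AddCommGroup A] [Module R A] [AddCommGroup B] [Module R B]
  [AddCommGroup C] [Module R C] [AddCommGroup M] [Module R M] {f : A →ₗ[R] B} {g : B →ₗ[R] C}

theorem exists_comp_eq_of_exact_of_surjective (hfg : Function.Exact f g)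
    (hg : Function.Surjective g) {φ : B →ₗ[R] M} (hφ : φ ∘ₗ f = 0) :
    ∃ k : C →ₗ[R] M, k ∘ₗ g = φ := by
  have range_le_ker : LinearMap.range f ≤ LinearMap.ker φ := LinearMap.range_le_ker_iff.mpr hφ
  refine ⟨(LinearMap.range f).liftQ φ range_le_ker ∘ₗ (hfg.linearEquivOfSurjective hg).symm, ?_⟩
  ext b
  simp

theorem exists_comp_eq_of_exact_of_injective (hfg : Function.Exact f g)
    (hf : Function.Injective f) {φ : M →ₗ[R] B} (hφ : g ∘ₗ φ = 0) :
    ∃ h : M →ₗ[R] A, f ∘ₗ h = φ := by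
  have mem_range (m : M) : φ m ∈ LinearMap.range f := (hfg _).mp (LinearMap.congr_fun hφ m)
  refine ⟨(LinearEquiv.ofInjective f hf).symm ∘ₗ φ.codRestrict (LinearMap.range f) mem_range, ?_⟩
  ext m
  simp

end Factorization

section Morphism

variable {R A₁ B₁ C₁ A₂ B₂ C₂ : Type*} [Ring R]
  [AddCommGroup A₁] [Module R A₁] [AddCommGroup B₁] [Module R B₁] [AddCommGroup C₁] [Module R C₁]
  [AddCommGroup A₂] [Module R A₂] [AddCommGroup B₂] [Module R B₂] [AddCommGroup C₂] [Module R C₂]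
  {f₁ : A₁ →ₗ[R] B₁} {g₁ : B₁ →ₗ[R] C₁} {f₂ : A₂ →ₗ[R] B₂} {g₂ : B₂ →ₗ[R] C₂}
  {α : A₁ →ₗ[R] A₂} {β : B₁ →ₗ[R] B₂} {γ : C₁ →ₗ[R] C₂}

theorem exists_lift_of_extension (hfg₁ : Function.Exact f₁ g₁) (hg₁ : Function.Surjective g₁)
    (hgf₂ : g₂ ∘ₗ f₂ = 0) (hαβ : β ∘ₗ f₁ = f₂ ∘ₗ α) (hβγ : g₂ ∘ₗ β = γ ∘ₗ g₁)
    {h : B₁ →ₗ[R] A₂} (hh : h ∘ₗ f₁ = α) :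
    ∃ k : C₁ →ₗ[R] B₂, g₂ ∘ₗ k = γ := by
  have comp_f₁ : (β - f₂ ∘ₗ h) ∘ₗ f₁ = 0 := by
    rw [LinearMap.sub_comp, LinearMap.comp_assoc, hh, hαβ, sub_self]
  obtain ⟨k, hk⟩ := exists_comp_eq_of_exact_of_surjective hfg₁ hg₁ comp_f₁
  refine ⟨k, (LinearMap.cancel_right hg₁).mp ?_⟩
  calc
    (g₂ ∘ₗ k) ∘ₗ g₁ = g₂ ∘ₗ (β - f₂ ∘ₗ h) := by rw [LinearMap.comp_assoc, hk]
    _ = γ ∘ₗ g₁ - (g₂ ∘ₗ f₂) ∘ₗ h := by rw [LinearMap.comp_sub, hβγ, LinearMap.comp_assoc]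
    _ = γ ∘ₗ g₁ := by rw [hgf₂, LinearMap.zero_comp, sub_zero]

theorem exists_extension_of_lift (hgf₁ : g₁ ∘ₗ f₁ = 0) (hfg₂ : Function.Exact f₂ g₂)
    (hf₂ : Function.Injective f₂) (hαβ : β ∘ₗ f₁ = f₂ ∘ₗ α) (hβγ : g₂ ∘ₗ β = γ ∘ₗ g₁)
    {k : C₁ →ₗ[R] B₂} (hk : g₂ ∘ₗ k = γ) :
    ∃ h : B₁ →ₗ[R] A₂, h ∘ₗ f₁ = α := by
  have g₂_comp : g₂ ∘ₗ (β - k ∘ₗ g₁) = 0 := by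
    rw [LinearMap.comp_sub, ← LinearMap.comp_assoc, hk, hβγ, sub_self]
  obtain ⟨h, hh⟩ := exists_comp_eq_of_exact_of_injective hfg₂ hf₂ g₂_comp
  refine ⟨h, (LinearMap.cancel_left hf₂).mp ?_⟩
  calc
    f₂ ∘ₗ h ∘ₗ f₁ = (β - k ∘ₗ g₁) ∘ₗ f₁ := by rw [← LinearMap.comp_assoc, hh]
    _ = f₂ ∘ₗ α - k ∘ₗ g₁ ∘ₗ f₁ := by rw [LinearMap.sub_comp, hαβ, LinearMap.comp_assoc]
    _ = f₂ ∘ₗ α := by rw [hgf₁, LinearMap.comp_zero, sub_zero]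

theorem s_split_left_iff_right_general
    (hfg₁ : Function.Exact f₁ g₁) (hg₁ : Function.Surjective g₁)
    (hfg₂ : Function.Exact f₂ g₂) (hf₂ : Function.Injective f₂)
    (hαβ : β ∘ₗ f₁ = f₂ ∘ₗ α) (hβγ : g₂ ∘ₗ β = γ ∘ₗ g₁) :
    (∃ h : B₁ →ₗ[R] A₂, h ∘ₗ f₁ = α) ↔ (∃ k : C₁ →ₗ[R] B₂, g₂ ∘ₗ k = γ) :=
  ⟨fun ⟨_, hh⟩ ↦ exists_lift_of_extension hfg₁ hg₁ hfg₂.linearMap_comp_eq_zero hαβ hβγ hh,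
    fun ⟨_, hk⟩ ↦ exists_extension_of_lift hfg₁.linearMap_comp_eq_zero hfg₂ hf₂ hαβ hβγ hk⟩

end Morphism

/-- In a short exact sequence `0 → A →f B →g C → 0`, the map `f`
admits a retraction up to `s` iff `g` admits a section up to `s`. -/
theorem s_split_left_iff_right
    {R : Type u} [CommRing R] (s : R)
    {A B C : Type u} [AddCommGroup A] [Module R A] [AddCommGroup B] [Module R B]
    [AddCommGroup C] [Module R C]
    (f : A →ₗ[R] B) (g : B →ₗ[R] C)
    (hf : Function.Injective f) (hg : Function.Surjective g)
    (hfg : LinearMap.range f = LinearMap.ker g) :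
    (∃ f' : B →ₗ[R] A, f' ∘ₗ f = s • LinearMap.id) ↔
      (∃ g' : C →ₗ[R] B, g ∘ₗ g' = s • LinearMap.id) := by
  have exact_fg : Function.Exact f g := LinearMap.exact_iff.mpr hfg.symm
  exact s_split_left_iff_right_general (β := s • LinearMap.id) exact_fg hg exact_fg hf
    (by ext; simp) (by ext; simp)
end
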